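/- arXiv:2411.01413 — 2 statements merged into one kernel-verified Lean document; each statement's English description precedes it below -/
import Mathlib

section
/- Let (g, {·,·,·}, μ, ε) be a noncommutative 3-Poisson color algebra and let α, β : g → g be two even commuting algebra morphisms for both operations (α∘β = β∘α, α and β preserve μ and {·,·,·}). Then (g, {·,·,·}_{α,β}, μ_{α,β}, ε, α, β) is a noncommutative 3-BiHom-Poisson color algebra, where μ_{α,β}(x,y) = μ(α(x), β(y)) and {x,y,z}_{α,β} = {α(x), α(y), β(z)} for all homogeneous x,y,z ∈ g. -/
/-- A skew-symmetric bicharacter (commutation factor) on an abelian group `Γ`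
with values in `K \ {0}` (nonvanishing is a consequence of `skew`). -/
structure Bicharacter (K : Type*) (Γ : Type*) [Field K] [AddCommGroup Γ] where
  ε : Γ → Γ → K
  skew : ∀ a b, ε a b * ε b a = 1
  add_right : ∀ a b c, ε a (b + c) = ε a b * ε a c
  add_left : ∀ a b c, ε (a + b) c = ε a c * ε b c

variable {K : Type*} [Field K] {Γ : Type*} [AddCommGroup Γ]
variable {g : Type*} [AddCommGroup g] [Module K g]
variable {V : Type*} [AddCommGroup V] [Module K V]

/-- A (multiplicative) BiHom-associative color algebra structure on a `Γ`-graded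
vector space, all identities being required on homogeneous elements. -/
structure IsBiHomAssocColor (𝒜 : Γ → Submodule K g) (χ : Bicharacter K Γ)
    (μ : g →ₗ[K] g →ₗ[K] g) (α β : g →ₗ[K] g) : Prop where
  mu_even : ∀ a b, ∀ x ∈ 𝒜 a, ∀ y ∈ 𝒜 b, μ x y ∈ 𝒜 (a + b)
  alpha_even : ∀ a, ∀ x ∈ 𝒜 a, α x ∈ 𝒜 a
  beta_even : ∀ a, ∀ x ∈ 𝒜 a, β x ∈ 𝒜 a
  comm : ∀ x, α (β x) = β (α x)
  mult_alpha : ∀ a b, ∀ x ∈ 𝒜 a, ∀ y ∈ 𝒜 b, μ (α x) (α y) = α (μ x y)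
  mult_beta : ∀ a b, ∀ x ∈ 𝒜 a, ∀ y ∈ 𝒜 b, μ (β x) (β y) = β (μ x y)
  assoc : ∀ a b c, ∀ x ∈ 𝒜 a, ∀ y ∈ 𝒜 b, ∀ z ∈ 𝒜 c,
    μ (α x) (μ y z) = μ (μ x y) (β z)

/-- A bimodule (representation) of a BiHom-associative color algebra. -/
structure IsAssocColorBimodule (𝒜 : Γ → Submodule K g) (𝒱 : Γ → Submodule K V)
    (χ : Bicharacter K Γ) (μ : g →ₗ[K] g →ₗ[K] g) (α β : g →ₗ[K] g)
    (l r : g →ₗ[K] V →ₗ[K] V) (αV βV : V →ₗ[K] V) : Prop where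
  l_even : ∀ a b, ∀ x ∈ 𝒜 a, ∀ v ∈ 𝒱 b, l x v ∈ 𝒱 (a + b)
  r_even : ∀ a b, ∀ x ∈ 𝒜 a, ∀ v ∈ 𝒱 b, r x v ∈ 𝒱 (a + b)
  alphaV_even : ∀ a, ∀ v ∈ 𝒱 a, αV v ∈ 𝒱 a
  betaV_even : ∀ a, ∀ v ∈ 𝒱 a, βV v ∈ 𝒱 a
  commV : ∀ v, αV (βV v) = βV (αV v)
  alphaV_l : ∀ a b, ∀ x ∈ 𝒜 a, ∀ v ∈ 𝒱 b, αV (l x v) = l (α x) (αV v)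
  betaV_l : ∀ a b, ∀ x ∈ 𝒜 a, ∀ v ∈ 𝒱 b, βV (l x v) = l (β x) (βV v)
  alphaV_r : ∀ a b, ∀ x ∈ 𝒜 a, ∀ v ∈ 𝒱 b, αV (r x v) = r (α x) (αV v)
  betaV_r : ∀ a b, ∀ x ∈ 𝒜 a, ∀ v ∈ 𝒱 b, βV (r x v) = r (β x) (βV v)
  l_mu : ∀ a b c, ∀ x ∈ 𝒜 a, ∀ y ∈ 𝒜 b, ∀ v ∈ 𝒱 c,
    l (α x) (l y v) = l (μ x y) (βV v)
  l_r : ∀ a b c, ∀ x ∈ 𝒜 a, ∀ y ∈ 𝒜 b, ∀ v ∈ 𝒱 c,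
    l (α x) (r y v) = χ.ε a b • r (β y) (l x v)
  r_mu : ∀ a b c, ∀ x ∈ 𝒜 a, ∀ y ∈ 𝒜 b, ∀ v ∈ 𝒱 c,
    r (μ x y) (αV v) = χ.ε a b • r (β y) (r x v)

/-- A 3-BiHom-Lie color algebra structure. -/
structure Is3BiHomLieColor (𝒜 : Γ → Submodule K g) (χ : Bicharacter K Γ)
    (m : g →ₗ[K] g →ₗ[K] g →ₗ[K] g) (α β : g →ₗ[K] g) : Prop where
  bracket_even : ∀ a b c, ∀ x ∈ 𝒜 a, ∀ y ∈ 𝒜 b, ∀ z ∈ 𝒜 c, m x y z ∈ 𝒜 (a + b + c)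
  alpha_even : ∀ a, ∀ x ∈ 𝒜 a, α x ∈ 𝒜 a
  beta_even : ∀ a, ∀ x ∈ 𝒜 a, β x ∈ 𝒜 a
  skew1 : ∀ a b c, ∀ x ∈ 𝒜 a, ∀ y ∈ 𝒜 b, ∀ z ∈ 𝒜 c,
    m (β x) (β y) (α z) = -(χ.ε a b • m (β y) (β x) (α z))
  skew2 : ∀ a b c, ∀ x ∈ 𝒜 a, ∀ y ∈ 𝒜 b, ∀ z ∈ 𝒜 c,
    m (β x) (β y) (α z) = -(χ.ε b c • m (β x) (β z) (α y))
  jacobi : ∀ a b c d e, ∀ x ∈ 𝒜 a, ∀ y ∈ 𝒜 b, ∀ z ∈ 𝒜 c, ∀ u ∈ 𝒜 d, ∀ v ∈ 𝒜 e,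
    m (β (β x)) (β (β y)) (m (β z) (β u) (α v))
      = χ.ε (a + b + c) (d + e) • m (β (β u)) (β (β v)) (m (β x) (β y) (α z))
        - (χ.ε (a + b) (c + e) * χ.ε d e) • m (β (β z)) (β (β v)) (m (β x) (β y) (α u))
        + χ.ε (a + b) (c + d) • m (β (β z)) (β (β u)) (m (β x) (β y) (α v))

/-- A multiplicative 3-BiHom-Lie color algebra structure. -/
structure IsMult3BiHomLieColor (𝒜 : Γ → Submodule K g) (χ : Bicharacter K Γ)
    (m : g →ₗ[K] g →ₗ[K] g →ₗ[K] g) (α β : g →ₗ[K] g)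
    extends Is3BiHomLieColor 𝒜 χ m α β : Prop where
  comm : ∀ x, α (β x) = β (α x)
  mult_alpha : ∀ a b c, ∀ x ∈ 𝒜 a, ∀ y ∈ 𝒜 b, ∀ z ∈ 𝒜 c,
    α (m x y z) = m (α x) (α y) (α z)
  mult_beta : ∀ a b c, ∀ x ∈ 𝒜 a, ∀ y ∈ 𝒜 b, ∀ z ∈ 𝒜 c,
    β (m x y z) = m (β x) (β y) (β z)

/-- A 3-Lie color algebra structure (`α = β = id` case), with the
ε-fundamental identity. -/
structure Is3LieColor (𝒜 : Γ → Submodule K g) (χ : Bicharacter K Γ)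
    (m : g →ₗ[K] g →ₗ[K] g →ₗ[K] g) : Prop where
  bracket_even : ∀ a b c, ∀ x ∈ 𝒜 a, ∀ y ∈ 𝒜 b, ∀ z ∈ 𝒜 c, m x y z ∈ 𝒜 (a + b + c)
  skew1 : ∀ a b c, ∀ x ∈ 𝒜 a, ∀ y ∈ 𝒜 b, ∀ z ∈ 𝒜 c,
    m x y z = -(χ.ε a b • m y x z)
  skew2 : ∀ a b c, ∀ x ∈ 𝒜 a, ∀ y ∈ 𝒜 b, ∀ z ∈ 𝒜 c,
    m x y z = -(χ.ε b c • m x z y)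
  fund : ∀ a b c d e, ∀ x ∈ 𝒜 a, ∀ y ∈ 𝒜 b, ∀ z ∈ 𝒜 c, ∀ t ∈ 𝒜 d, ∀ u ∈ 𝒜 e,
    m x y (m z t u)
      = m (m x y z) t u + χ.ε (a + b) c • m z (m x y t) u
        + χ.ε (a + b) (c + d) • m z t (m x y u)

/-- A representation of a 3-BiHom-Lie color algebra on a graded vector space `V`. -/
structure Is3BiHomLieRep (𝒜 : Γ → Submodule K g) (𝒱 : Γ → Submodule K V)
    (χ : Bicharacter K Γ) (m : g →ₗ[K] g →ₗ[K] g →ₗ[K] g) (α β : g →ₗ[K] g)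
    (ρ : g →ₗ[K] g →ₗ[K] V →ₗ[K] V) (αV βV : V →ₗ[K] V) : Prop where
  commV : ∀ v, αV (βV v) = βV (αV v)
  rho_even : ∀ a b c, ∀ x ∈ 𝒜 a, ∀ y ∈ 𝒜 b, ∀ v ∈ 𝒱 c, ρ x y v ∈ 𝒱 (a + b + c)
  alphaV_even : ∀ a, ∀ v ∈ 𝒱 a, αV v ∈ 𝒱 a
  betaV_even : ∀ a, ∀ v ∈ 𝒱 a, βV v ∈ 𝒱 a
  rho_skew : ∀ a b, ∀ x ∈ 𝒜 a, ∀ y ∈ 𝒜 b, ρ x y = -(χ.ε a b • ρ y x)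
  cond1 : ∀ a b, ∀ u ∈ 𝒜 a, ∀ v ∈ 𝒜 b,
    ρ (α u) (α v) ∘ₗ αV = αV ∘ₗ ρ u v
  cond2 : ∀ a b, ∀ u ∈ 𝒜 a, ∀ v ∈ 𝒜 b,
    ρ (β u) (β v) ∘ₗ βV = βV ∘ₗ ρ u v
  cond3 : ∀ a b c d, ∀ u ∈ 𝒜 a, ∀ v ∈ 𝒜 b, ∀ x ∈ 𝒜 c, ∀ y ∈ 𝒜 d,
    ρ (α (β u)) (α (β v)) ∘ₗ ρ x y
      = χ.ε (c + d) (a + b) • (ρ (β x) (β y) ∘ₗ ρ (α u) (α v))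
        + ρ (m (β u) (β v) x) (β y) ∘ₗ βV
        + χ.ε c (a + b) • (ρ (β x) (m (β u) (β v) y) ∘ₗ βV)
  cond4 : ∀ a b c d, ∀ u ∈ 𝒜 a, ∀ v ∈ 𝒜 b, ∀ x ∈ 𝒜 c, ∀ y ∈ 𝒜 d,
    ρ (m (β u) (β v) x) (β y) ∘ₗ βV
      = χ.ε a (c + b) • (ρ (α (β v)) (β x) ∘ₗ ρ (α u) y)
        + χ.ε c (a + b) • (ρ (β x) (α (β u)) ∘ₗ ρ (α v) y)
        + ρ (α (β u)) (α (β v)) ∘ₗ ρ x y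

/-- A noncommutative 3-BiHom-Poisson color algebra structure. -/
structure IsNC3BiHomPoissonColor (𝒜 : Γ → Submodule K g) (χ : Bicharacter K Γ)
    (m : g →ₗ[K] g →ₗ[K] g →ₗ[K] g) (μ : g →ₗ[K] g →ₗ[K] g)
    (α β : g →ₗ[K] g) : Prop where
  assoc : IsBiHomAssocColor 𝒜 χ μ α β
  lie : Is3BiHomLieColor 𝒜 χ m α β
  leibniz : ∀ a b c d, ∀ x ∈ 𝒜 a, ∀ y ∈ 𝒜 b, ∀ z ∈ 𝒜 c, ∀ t ∈ 𝒜 d,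
    m (α (β x)) (α (β y)) (μ z t)
      = μ (m (β x) (β y) z) (β t) + χ.ε (a + b) c • μ (β z) (m (α x) (α y) t)

/-- A representation of a noncommutative 3-BiHom-Poisson color algebra. -/
structure IsNC3BiHomPoissonRep (𝒜 : Γ → Submodule K g) (𝒱 : Γ → Submodule K V)
    (χ : Bicharacter K Γ) (m : g →ₗ[K] g →ₗ[K] g →ₗ[K] g) (μ : g →ₗ[K] g →ₗ[K] g)
    (α β : g →ₗ[K] g) (ρ : g →ₗ[K] g →ₗ[K] V →ₗ[K] V)
    (l r : g →ₗ[K] V →ₗ[K] V) (αV βV : V →ₗ[K] V) : Prop where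
  bimod : IsAssocColorBimodule 𝒜 𝒱 χ μ α β l r αV βV
  lierep : Is3BiHomLieRep 𝒜 𝒱 χ m α β ρ αV βV
  comp1 : ∀ a b c, ∀ x ∈ 𝒜 a, ∀ y ∈ 𝒜 b, ∀ z ∈ 𝒜 c,
    ρ (α (β x)) (α (β y)) ∘ₗ l z
      = l (m (β x) (β y) z) ∘ₗ βV + χ.ε (a + b) c • (l (β z) ∘ₗ ρ (α x) (α y))
  comp2 : ∀ a b c, ∀ x ∈ 𝒜 a, ∀ y ∈ 𝒜 b, ∀ z ∈ 𝒜 c,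
    ρ (α (β x)) (α (β y)) ∘ₗ r z
      = χ.ε (a + b) c • (r (β z) ∘ₗ ρ (β x) (β y)) + r (m (α x) (α y) z) ∘ₗ βV
  comp3 : ∀ a b c, ∀ x ∈ 𝒜 a, ∀ y ∈ 𝒜 b, ∀ z ∈ 𝒜 c,
    ρ (α (β x)) (μ (β y) (β z)) ∘ₗ (αV ∘ₗ αV ∘ₗ βV)
      = χ.ε (a + b) c • (r (α (β z)) ∘ₗ ρ x (β (β y)) ∘ₗ (αV ∘ₗ βV))
        + χ.ε a b • (l (α (β y)) ∘ₗ ρ (α x) (β z) ∘ₗ (αV ∘ₗ αV))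

/-- The 3-BiHom-ε-commutator of a ternary product, on homogeneous elements of
degrees `a`, `b`, `c`. -/
def preC (χ : Bicharacter K Γ) (m : g →ₗ[K] g →ₗ[K] g →ₗ[K] g)
    (α β : g ≃ₗ[K] g) (a b c : Γ) (x y z : g) : g :=
  m x y z - χ.ε b c • m x (β (α.symm z)) (α (β.symm y))
    + χ.ε a (b + c) • m y (β (α.symm z)) (α (β.symm x))

/-- A 3-BiHom-pre-Lie color algebra structure (with bijective structure maps). -/
structure Is3BiHomPreLieColor (𝒜 : Γ → Submodule K g) (χ : Bicharacter K Γ)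
    (m : g →ₗ[K] g →ₗ[K] g →ₗ[K] g) (α β : g ≃ₗ[K] g) : Prop where
  bracket_even : ∀ a b c, ∀ x ∈ 𝒜 a, ∀ y ∈ 𝒜 b, ∀ z ∈ 𝒜 c, m x y z ∈ 𝒜 (a + b + c)
  alpha_even : ∀ a, ∀ x ∈ 𝒜 a, α x ∈ 𝒜 a
  beta_even : ∀ a, ∀ x ∈ 𝒜 a, β x ∈ 𝒜 a
  comm : ∀ x, α (β x) = β (α x)
  mult_alpha : ∀ a b c, ∀ x ∈ 𝒜 a, ∀ y ∈ 𝒜 b, ∀ z ∈ 𝒜 c,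
    α (m x y z) = m (α x) (α y) (α z)
  mult_beta : ∀ a b c, ∀ x ∈ 𝒜 a, ∀ y ∈ 𝒜 b, ∀ z ∈ 𝒜 c,
    β (m x y z) = m (β x) (β y) (β z)
  skew : ∀ a b c, ∀ x ∈ 𝒜 a, ∀ y ∈ 𝒜 b, ∀ z ∈ 𝒜 c,
    m (β x) (β y) (α z) = -(χ.ε a b • m (β y) (β x) (α z))
  identity3 : ∀ a₁ a₂ a₃ a₄ a₅, ∀ x₁ ∈ 𝒜 a₁, ∀ x₂ ∈ 𝒜 a₂, ∀ x₃ ∈ 𝒜 a₃,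
      ∀ x₄ ∈ 𝒜 a₄, ∀ x₅ ∈ 𝒜 a₅,
    m (α (β x₄)) (α (β x₅)) (m x₁ x₂ x₃)
      = m (preC χ m α β a₄ a₅ a₁ (β x₄) (β x₅) x₁) (β x₂) (β x₃)
        + χ.ε a₁ (a₄ + a₅) • m (β x₁) (preC χ m α β a₄ a₅ a₂ (β x₄) (β x₅) x₂) (β x₃)
        + χ.ε (a₁ + a₂) (a₄ + a₅) • m (β x₁) (β x₂) (m (α x₄) (α x₅) x₃)
  identity4 : ∀ a₁ a₂ a₃ a₄ a₅, ∀ x₁ ∈ 𝒜 a₁, ∀ x₂ ∈ 𝒜 a₂, ∀ x₃ ∈ 𝒜 a₃,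
      ∀ x₄ ∈ 𝒜 a₄, ∀ x₅ ∈ 𝒜 a₅,
    m (preC χ m α β a₄ a₅ a₁ (β x₄) (β x₅) x₁) (β x₂) (β x₃)
      = χ.ε a₄ (a₁ + a₅) • m (α (β x₅)) (β x₁) (m (α x₄) x₂ x₃)
        + χ.ε a₁ (a₄ + a₅) • m (β x₁) (α (β x₄)) (m (α x₅) x₂ x₃)
        + m (α (β x₄)) (α (β x₅)) (m x₁ x₂ x₃)

/-- A BiHom-dendriform color algebra structure. -/
structure IsBiHomDendriformColor (𝒜 : Γ → Submodule K g) (χ : Bicharacter K Γ)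
    (pl pr : g →ₗ[K] g →ₗ[K] g) (α β : g →ₗ[K] g) : Prop where
  pl_even : ∀ a b, ∀ x ∈ 𝒜 a, ∀ y ∈ 𝒜 b, pl x y ∈ 𝒜 (a + b)
  pr_even : ∀ a b, ∀ x ∈ 𝒜 a, ∀ y ∈ 𝒜 b, pr x y ∈ 𝒜 (a + b)
  alpha_even : ∀ a, ∀ x ∈ 𝒜 a, α x ∈ 𝒜 a
  beta_even : ∀ a, ∀ x ∈ 𝒜 a, β x ∈ 𝒜 a
  comm : ∀ x, α (β x) = β (α x)
  alpha_pl : ∀ a b, ∀ x ∈ 𝒜 a, ∀ y ∈ 𝒜 b, α (pl x y) = pl (α x) (α y)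
  beta_pl : ∀ a b, ∀ x ∈ 𝒜 a, ∀ y ∈ 𝒜 b, β (pl x y) = pl (β x) (β y)
  alpha_pr : ∀ a b, ∀ x ∈ 𝒜 a, ∀ y ∈ 𝒜 b, α (pr x y) = pr (α x) (α y)
  beta_pr : ∀ a b, ∀ x ∈ 𝒜 a, ∀ y ∈ 𝒜 b, β (pr x y) = pr (β x) (β y)
  ax1 : ∀ a b c, ∀ x ∈ 𝒜 a, ∀ y ∈ 𝒜 b, ∀ z ∈ 𝒜 c,
    pl (pl x y) (β z) = pl (α x) (pl y z + pr y z)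
  ax2 : ∀ a b c, ∀ x ∈ 𝒜 a, ∀ y ∈ 𝒜 b, ∀ z ∈ 𝒜 c,
    pl (pr x y) (β z) = pr (α x) (pl y z)
  ax3 : ∀ a b c, ∀ x ∈ 𝒜 a, ∀ y ∈ 𝒜 b, ∀ z ∈ 𝒜 c,
    pr (α x) (pr y z) = pr (pl x y + pr x y) (β z)

/-- A noncommutative 3-BiHom-pre-Poisson color algebra structure. -/
structure IsNC3BiHomPrePoissonColor (𝒜 : Γ → Submodule K g) (χ : Bicharacter K Γ)
    (m : g →ₗ[K] g →ₗ[K] g →ₗ[K] g) (pl pr : g →ₗ[K] g →ₗ[K] g)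
    (α β : g ≃ₗ[K] g) : Prop where
  prelie : Is3BiHomPreLieColor 𝒜 χ m α β
  dend : IsBiHomDendriformColor 𝒜 χ pl pr α.toLinearMap β.toLinearMap
  comp1 : ∀ a b c d, ∀ x ∈ 𝒜 a, ∀ y ∈ 𝒜 b, ∀ z ∈ 𝒜 c, ∀ t ∈ 𝒜 d,
    m (α (β (β x))) (α (β (β y))) (pl z (α t))
        - pl (m (β (β x)) (β (β y)) z) (α (β t))
      = χ.ε c (a + b) •
          pl (β z)
            (m (α (β x)) (α (β y)) (α t) - χ.ε b d • m (α (β x)) (β t) (α (α y))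
              + χ.ε a (b + d) • m (α (β y)) (β t) (α (α x)))
  comp2 : ∀ a b c d, ∀ x ∈ 𝒜 a, ∀ y ∈ 𝒜 b, ∀ z ∈ 𝒜 c, ∀ t ∈ 𝒜 d,
    m (α (β x)) (α (α (β y))) (pr (α z) t)
        - χ.ε (a + b) c • pr (α (β z)) (m (α x) (α (α y)) t)
      = pr (m (β x) (α (β y)) (α z) - χ.ε b c • m (β x) (β z) (α (α y))
            + χ.ε a (b + c) • m (α (β y)) (β z) (α x)) (β t)
  comp3 : ∀ a b c d, ∀ x ∈ 𝒜 a, ∀ y ∈ 𝒜 b, ∀ z ∈ 𝒜 c, ∀ t ∈ 𝒜 d,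
    m (α (β x)) (β (pl y z)) (α (α (β t))) + m (α (β x)) (β (pr y z)) (α (α (β t)))
      = χ.ε a b • pr (α (β y)) (m (α x) (β z) (α (α t)))
        + χ.ε c d • pl (m (β x) (β y) (α (β t))) (α (β z))

/-!
When all linear maps in sight are morphisms of the operations and commute with one another, they can
be pushed onto the arguments. Each axiom of the twisted operations then becomes the corresponding
axiom of the original ones, evaluated at arguments moved by words in `α` and `β`; the words agree in
every term, and evenness keeps the degrees, hence the coefficients `ε`. This works for any
structure maps `α₀`, `β₀` in place of the identity. For `α₀ = β₀ = id`, the 3-BiHom-Jacobi identity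
is the fundamental identity with the inner bracket of each term moved to the last slot.
-/

namespace Is3LieColor

variable {𝒜 : Γ → Submodule K g} {χ : Bicharacter K Γ} {m : g →ₗ[K] g →ₗ[K] g →ₗ[K] g}

theorem bracket_rotate (h : Is3LieColor 𝒜 χ m) {a b c : Γ} {x y z : g}
    (hx : x ∈ 𝒜 a) (hy : y ∈ 𝒜 b) (hz : z ∈ 𝒜 c) :
    m x y z = χ.ε a (b + c) • m y z x := by
  rw [h.skew1 a b c x hx y hy z hz, h.skew2 b a c y hy x hx z hz, χ.add_right]
  module

theorem jacobi (h : Is3LieColor 𝒜 χ m) (a b c d e : Γ) (x : g) (hx : x ∈ 𝒜 a)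
    (y : g) (hy : y ∈ 𝒜 b) (z : g) (hz : z ∈ 𝒜 c) (u : g) (hu : u ∈ 𝒜 d)
    (v : g) (hv : v ∈ 𝒜 e) :
    m x y (m z u v)
      = χ.ε (a + b + c) (d + e) • m u v (m x y z)
        - (χ.ε (a + b) (c + e) * χ.ε d e) • m z v (m x y u)
        + χ.ε (a + b) (c + d) • m z u (m x y v) := by
  have hxyz : m x y z ∈ 𝒜 (a + b + c) := h.bracket_even a b c x hx y hy z hz
  have hxyu : m x y u ∈ 𝒜 (a + b + d) := h.bracket_even a b d x hx y hy u hu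
  have first_term : m (m x y z) u v = χ.ε (a + b + c) (d + e) • m u v (m x y z) :=
    h.bracket_rotate hxyz hu hv
  have second_term : m z (m x y u) v = -(χ.ε (a + b + d) e • m z v (m x y u)) :=
    h.skew2 c (a + b + d) e z hz _ hxyu v hv
  rw [h.fund a b c d e x hx y hy z hz u hu v hv, first_term, second_term,
    χ.add_left (a + b) d e, χ.add_right (a + b) c e]
  module

theorem is3BiHomLieColor_id (h : Is3LieColor 𝒜 χ m) :
    Is3BiHomLieColor 𝒜 χ m LinearMap.id LinearMap.id where
  bracket_even := h.bracket_even
  alpha_even _ _ hx := hx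
  beta_even _ _ hx := hx
  skew1 := h.skew1
  skew2 := h.skew2
  jacobi := h.jacobi

end Is3LieColor

section TwistingData

variable {R M ι : Type*} [CommSemiring R] [AddCommMonoid M] [Module R M]

/-- The ternary bracket `{x, y, z}_{α,β} = {α x, α y, β z}`. The corresponding binary product
`μ_{α,β}` is `μ.compl₁₂ α β`. -/
def twistBracket (m : M →ₗ[R] M →ₗ[R] M →ₗ[R] M) (α β : M →ₗ[R] M) :
    M →ₗ[R] M →ₗ[R] M →ₗ[R] M :=
  (m.compl₁₂ α α).compr₂ (LinearMap.lcomp R M β)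

@[simp]
theorem twistBracket_apply (m : M →ₗ[R] M →ₗ[R] M →ₗ[R] M) (α β : M →ₗ[R] M) (x y z : M) :
    twistBracket m α β x y z = m (α x) (α y) (β z) :=
  rfl

/-- The pair of linear maps `α`, `β` along which a BiHom-type color algebra with structure maps
`α₀`, `β₀` can be twisted: both are even and commute with each other and with `α₀`, `β₀`.
Compatibility with the operations is not part of the notion, as it depends on the operations
considered. -/
structure IsTwistingPair (𝒜 : ι → Submodule R M) (α₀ β₀ α β : M →ₗ[R] M) : Prop where
  alpha_even : ∀ a, ∀ x ∈ 𝒜 a, α x ∈ 𝒜 a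
  beta_even : ∀ a, ∀ x ∈ 𝒜 a, β x ∈ 𝒜 a
  alpha_beta : ∀ x, α (β x) = β (α x)
  alpha_alpha₀ : ∀ x, α (α₀ x) = α₀ (α x)
  alpha_beta₀ : ∀ x, α (β₀ x) = β₀ (α x)
  beta_alpha₀ : ∀ x, β (α₀ x) = α₀ (β x)
  beta_beta₀ : ∀ x, β (β₀ x) = β₀ (β x)

theorem IsTwistingPair.beta_alpha_even {𝒜 : ι → Submodule R M}
    {α₀ β₀ α β : M →ₗ[R] M} (hp : IsTwistingPair 𝒜 α₀ β₀ α β) {a : ι} {x : M}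
    (hx : x ∈ 𝒜 a) : β (α x) ∈ 𝒜 a :=
  hp.beta_even a _ (hp.alpha_even a x hx)

end TwistingData

section Twist

variable {𝒜 : Γ → Submodule K g} {χ : Bicharacter K Γ} {μ : g →ₗ[K] g →ₗ[K] g}
  {m : g →ₗ[K] g →ₗ[K] g →ₗ[K] g} {α₀ β₀ α β : g →ₗ[K] g}

theorem IsBiHomAssocColor.twist (h : IsBiHomAssocColor 𝒜 χ μ α₀ β₀)
    (hp : IsTwistingPair 𝒜 α₀ β₀ α β)
    (hαμ : ∀ x y, α (μ x y) = μ (α x) (α y)) (hβμ : ∀ x y, β (μ x y) = μ (β x) (β y)) :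
    IsBiHomAssocColor 𝒜 χ (μ.compl₁₂ α β) (α₀ ∘ₗ α) (β₀ ∘ₗ β) where
  mu_even a b x hx y hy :=
    h.mu_even a b (α x) (hp.alpha_even a x hx) (β y) (hp.beta_even b y hy)
  alpha_even a x hx := h.alpha_even a (α x) (hp.alpha_even a x hx)
  beta_even a x hx := h.beta_even a (β x) (hp.beta_even a x hx)
  comm x := by
    simp only [LinearMap.comp_apply, hp.alpha_beta₀, hp.beta_alpha₀, hp.alpha_beta, h.comm]
  mult_alpha a b x hx y hy := by
    simp only [LinearMap.compl₁₂_apply, LinearMap.comp_apply, hαμ, hp.alpha_alpha₀,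
      hp.beta_alpha₀, hp.alpha_beta]
    exact h.mult_alpha a b (α (α x)) (hp.alpha_even a _ (hp.alpha_even a x hx))
      (β (α y)) (hp.beta_alpha_even hy)
  mult_beta a b x hx y hy := by
    simp only [LinearMap.compl₁₂_apply, LinearMap.comp_apply, hβμ, hp.alpha_beta₀,
      hp.beta_beta₀, hp.alpha_beta]
    exact h.mult_beta a b (β (α x)) (hp.beta_alpha_even hx)
      (β (β y)) (hp.beta_even b _ (hp.beta_even b y hy))
  assoc a b c x hx y hy z hz := by
    simp only [LinearMap.compl₁₂_apply, LinearMap.comp_apply, hαμ, hβμ, hp.alpha_alpha₀,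
      hp.beta_beta₀, hp.alpha_beta]
    exact h.assoc a b c (α (α x)) (hp.alpha_even a _ (hp.alpha_even a x hx))
      (β (α y)) (hp.beta_alpha_even hy) (β (β z)) (hp.beta_even c _ (hp.beta_even c z hz))

theorem Is3BiHomLieColor.twist (h : Is3BiHomLieColor 𝒜 χ m α₀ β₀)
    (hp : IsTwistingPair 𝒜 α₀ β₀ α β) (hβm : ∀ x y z, β (m x y z) = m (β x) (β y) (β z)) :
    Is3BiHomLieColor 𝒜 χ (twistBracket m α β) (α₀ ∘ₗ α) (β₀ ∘ₗ β) where
  bracket_even a b c x hx y hy z hz :=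
    h.bracket_even a b c (α x) (hp.alpha_even a x hx) (α y) (hp.alpha_even b y hy)
      (β z) (hp.beta_even c z hz)
  alpha_even a x hx := h.alpha_even a (α x) (hp.alpha_even a x hx)
  beta_even a x hx := h.beta_even a (β x) (hp.beta_even a x hx)
  skew1 a b c x hx y hy z hz := by
    simp only [twistBracket_apply, LinearMap.comp_apply, hp.alpha_beta₀, hp.beta_alpha₀,
      hp.alpha_beta]
    exact h.skew1 a b c (β (α x)) (hp.beta_alpha_even hx) (β (α y)) (hp.beta_alpha_even hy)
      (β (α z)) (hp.beta_alpha_even hz)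
  skew2 a b c x hx y hy z hz := by
    simp only [twistBracket_apply, LinearMap.comp_apply, hp.alpha_beta₀, hp.beta_alpha₀,
      hp.alpha_beta]
    exact h.skew2 a b c (β (α x)) (hp.beta_alpha_even hx) (β (α y)) (hp.beta_alpha_even hy)
      (β (α z)) (hp.beta_alpha_even hz)
  jacobi a b c d e x hx y hy z hz u hu v hv := by
    have hββα : ∀ {i w}, w ∈ 𝒜 i → β (β (α w)) ∈ 𝒜 i :=
      fun hw => hp.beta_even _ _ (hp.beta_alpha_even hw)
    simp only [twistBracket_apply, LinearMap.comp_apply, hβm, hp.alpha_beta₀, hp.beta_alpha₀,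
      hp.beta_beta₀, hp.alpha_beta]
    exact h.jacobi a b c d e (β (β (α x))) (hββα hx) (β (β (α y))) (hββα hy)
      (β (β (α z))) (hββα hz) (β (β (α u))) (hββα hu) (β (β (α v))) (hββα hv)

theorem twist_nc3Poisson_general (h : IsNC3BiHomPoissonColor 𝒜 χ m μ α₀ β₀)
    (hp : IsTwistingPair 𝒜 α₀ β₀ α β)
    (hαμ : ∀ x y, α (μ x y) = μ (α x) (α y)) (hβμ : ∀ x y, β (μ x y) = μ (β x) (β y))
    (hαm : ∀ x y z, α (m x y z) = m (α x) (α y) (α z))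
    (hβm : ∀ x y z, β (m x y z) = m (β x) (β y) (β z)) :
    IsNC3BiHomPoissonColor 𝒜 χ (twistBracket m α β) (μ.compl₁₂ α β) (α₀ ∘ₗ α) (β₀ ∘ₗ β) where
  assoc := h.assoc.twist hp hαμ hβμ
  lie := h.lie.twist hp hβm
  leibniz a b c d x hx y hy z hz t ht := by
    have hβαα : ∀ {i w}, w ∈ 𝒜 i → β (α (α w)) ∈ 𝒜 i :=
      fun hw => hp.beta_alpha_even (hp.alpha_even _ _ hw)
    simp only [twistBracket_apply, LinearMap.compl₁₂_apply, LinearMap.comp_apply, hαm, hβm, hβμ,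
      hp.alpha_alpha₀, hp.alpha_beta₀, hp.beta_alpha₀, hp.beta_beta₀, hp.alpha_beta]
    exact h.leibniz a b c d (β (α (α x))) (hβαα hx) (β (α (α y))) (hβαα hy)
      (β (α z)) (hp.beta_alpha_even hz) (β (β t)) (hp.beta_even d _ (hp.beta_even d t ht))

end Twist

/-- twisting a noncommutative 3-Poisson color algebra by two even
commuting algebra morphisms yields a noncommutative 3-BiHom-Poisson color
algebra. -/
theorem twist_nc3Poisson
    (𝒜 : Γ → Submodule K g) (χ : Bicharacter K Γ)
    (m : g →ₗ[K] g →ₗ[K] g →ₗ[K] g) (μ : g →ₗ[K] g →ₗ[K] g)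
    (hassoc : IsBiHomAssocColor 𝒜 χ μ LinearMap.id LinearMap.id)
    (hlie : Is3LieColor 𝒜 χ m)
    (hleib : ∀ a b c d : Γ, ∀ x ∈ 𝒜 a, ∀ y ∈ 𝒜 b, ∀ z ∈ 𝒜 c, ∀ t ∈ 𝒜 d,
      m x y (μ z t) = μ (m x y z) t + χ.ε (a + b) c • μ z (m x y t))
    (α β : g →ₗ[K] g)
    (hαe : ∀ a, ∀ x ∈ 𝒜 a, α x ∈ 𝒜 a) (hβe : ∀ a, ∀ x ∈ 𝒜 a, β x ∈ 𝒜 a)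
    (hcomm : ∀ x, α (β x) = β (α x))
    (hαμ : ∀ x y, α (μ x y) = μ (α x) (α y))
    (hβμ : ∀ x y, β (μ x y) = μ (β x) (β y))
    (hαm : ∀ x y z, α (m x y z) = m (α x) (α y) (α z))
    (hβm : ∀ x y z, β (m x y z) = m (β x) (β y) (β z))
    (μ' : g →ₗ[K] g →ₗ[K] g) (hμ' : ∀ x y, μ' x y = μ (α x) (β y))
    (m' : g →ₗ[K] g →ₗ[K] g →ₗ[K] g)
    (hm' : ∀ x y z, m' x y z = m (α x) (α y) (β z)) :
    IsNC3BiHomPoissonColor 𝒜 χ m' μ' α β := by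
  obtain rfl : μ' = μ.compl₁₂ α β := LinearMap.ext₂ hμ'
  obtain rfl : m' = twistBracket m α β := LinearMap.ext₂ fun x y => LinearMap.ext (hm' x y)
  have hp : IsTwistingPair 𝒜 LinearMap.id LinearMap.id α β :=
    ⟨hαe, hβe, hcomm, fun _ => rfl, fun _ => rfl, fun _ => rfl, fun _ => rfl⟩
  exact twist_nc3Poisson_general ⟨hassoc, hlie.is3BiHomLieColor_id, hleib⟩ hp hαμ hβμ hαm hβm
end

section
/- Let R : g → g be a Rota-Baxter operator of weight zero on a noncommutative 3-BiHom-Poisson color algebra (g, {·,·,·}, μ, ε, α, β), i.e. R is an even linear map commuting with α and β that is simultaneously a Rota-Baxter operator of weight zero on (g, μ, ε, α, β) and on (g, {·,·,·}, ε, α, β). Then (g, {·,·,·}_R, μ_R, ε, α, β) is a noncommutative 3-BiHom-Poisson color algebra, where μ_R(x,y) = μ(R(x),y) + μ(x,R(y)) and {x,y,z}_R = [R(x),R(y),z] + [R(x),y,R(z)] + [x,R(y),R(z)] (brackets taken with {·,·,·}) for all homogeneous x,y,z. -/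
variable {K : Type*} [Field K] {Γ : Type*} [AddCommGroup Γ]
variable {g : Type*} [AddCommGroup g] [Module K g]
variable {V : Type*} [AddCommGroup V] [Module K V]

/-!
The Rota-Baxter identities say that `R` is a morphism from the induced products to the original
ones. Hence an iterated induced product of homogeneous elements is the sum of the iterated original
products in which `R` is applied to every entry but one. Each defining identity is multilinear, so
for the induced products it is the sum of its instances for the original products, one for each
choice of the entry left untouched.
-/

section RotaBaxter

variable {S ι M : Type*} [CommSemiring S] [AddCommMonoid M] [Module S M]

/-- An even linear operator commuting with both twisting maps, the part of the notion of a
Rota-Baxter operator that does not involve a product. Evenness is relative to an arbitrary family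
of submodules. -/
structure IsEvenCommuting (𝒜 : ι → Submodule S M) (α β R : M →ₗ[S] M) : Prop where
  even : ∀ a, ∀ x ∈ 𝒜 a, R x ∈ 𝒜 a
  comm_alpha : ∀ x, R (α x) = α (R x)
  comm_beta : ∀ x, R (β x) = β (R x)

/-- The binary product `μ_R` induced by an operator `R`. -/
def rotaBaxterMul (μ : M →ₗ[S] M →ₗ[S] M) (R : M →ₗ[S] M) : M →ₗ[S] M →ₗ[S] M :=
  μ ∘ₗ R + μ.compl₂ R

/-- The ternary bracket `{·,·,·}_R` induced by an operator `R`. -/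
def rotaBaxterBracket (m : M →ₗ[S] M →ₗ[S] M →ₗ[S] M) (R : M →ₗ[S] M) :
    M →ₗ[S] M →ₗ[S] M →ₗ[S] M :=
  m.compl₁₂ R R + (m ∘ₗ R).compr₂ (LinearMap.lcomp S M R)
    + (m.compl₂ R).compr₂ (LinearMap.lcomp S M R)

/-- A Rota-Baxter operator of weight zero for a binary product, the defining identity being
required on homogeneous elements. -/
structure IsRotaBaxterMul (𝒜 : ι → Submodule S M) (μ : M →ₗ[S] M →ₗ[S] M)
    (α β R : M →ₗ[S] M) : Prop extends IsEvenCommuting 𝒜 α β R where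
  mul_map : ∀ a b, ∀ x ∈ 𝒜 a, ∀ y ∈ 𝒜 b, μ (R x) (R y) = R (rotaBaxterMul μ R x y)

/-- A Rota-Baxter operator of weight zero for a ternary bracket, the defining identity being
required on homogeneous elements. -/
structure IsRotaBaxterBracket (𝒜 : ι → Submodule S M) (m : M →ₗ[S] M →ₗ[S] M →ₗ[S] M)
    (α β R : M →ₗ[S] M) : Prop extends IsEvenCommuting 𝒜 α β R where
  bracket_map : ∀ a b c, ∀ x ∈ 𝒜 a, ∀ y ∈ 𝒜 b, ∀ z ∈ 𝒜 c,
    m (R x) (R y) (R z) = R (rotaBaxterBracket m R x y z)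

variable {𝒜 : ι → Submodule S M} {μ : M →ₗ[S] M →ₗ[S] M} {m : M →ₗ[S] M →ₗ[S] M →ₗ[S] M}
  {α β R : M →ₗ[S] M}

theorem rotaBaxterMul_apply (μ : M →ₗ[S] M →ₗ[S] M) (R : M →ₗ[S] M) (x y : M) :
    rotaBaxterMul μ R x y = μ (R x) y + μ x (R y) := rfl

theorem rotaBaxterBracket_apply (m : M →ₗ[S] M →ₗ[S] M →ₗ[S] M) (R : M →ₗ[S] M) (x y z : M) :
    rotaBaxterBracket m R x y z = m (R x) (R y) z + m (R x) y (R z) + m x (R y) (R z) := rfl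

theorem rotaBaxterMul_mem [Add ι] (hR : ∀ a, ∀ x ∈ 𝒜 a, R x ∈ 𝒜 a)
    (hμ : ∀ a b, ∀ x ∈ 𝒜 a, ∀ y ∈ 𝒜 b, μ x y ∈ 𝒜 (a + b))
    {a b : ι} {x y : M} (hx : x ∈ 𝒜 a) (hy : y ∈ 𝒜 b) :
    rotaBaxterMul μ R x y ∈ 𝒜 (a + b) :=
  add_mem (hμ _ _ _ (hR _ _ hx) _ hy) (hμ _ _ _ hx _ (hR _ _ hy))

theorem rotaBaxterBracket_mem [Add ι] (hR : ∀ a, ∀ x ∈ 𝒜 a, R x ∈ 𝒜 a)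
    (hm : ∀ a b c, ∀ x ∈ 𝒜 a, ∀ y ∈ 𝒜 b, ∀ z ∈ 𝒜 c, m x y z ∈ 𝒜 (a + b + c))
    {a b c : ι} {x y z : M} (hx : x ∈ 𝒜 a) (hy : y ∈ 𝒜 b) (hz : z ∈ 𝒜 c) :
    rotaBaxterBracket m R x y z ∈ 𝒜 (a + b + c) :=
  add_mem (add_mem
    (hm _ _ _ _ (hR _ _ hx) _ (hR _ _ hy) _ hz)
    (hm _ _ _ _ (hR _ _ hx) _ hy _ (hR _ _ hz)))
    (hm _ _ _ _ hx _ (hR _ _ hy) _ (hR _ _ hz))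

theorem rotaBaxterMul_map_map {φ : M →ₗ[S] M} (hR : ∀ a, ∀ x ∈ 𝒜 a, R x ∈ 𝒜 a)
    (hRφ : ∀ x, R (φ x) = φ (R x))
    (hφ : ∀ a b, ∀ x ∈ 𝒜 a, ∀ y ∈ 𝒜 b, μ (φ x) (φ y) = φ (μ x y))
    {a b : ι} {x y : M} (hx : x ∈ 𝒜 a) (hy : y ∈ 𝒜 b) :
    rotaBaxterMul μ R (φ x) (φ y) = φ (rotaBaxterMul μ R x y) := by
  simp only [rotaBaxterMul_apply, hRφ, map_add]
  rw [hφ _ _ _ (hR _ _ hx) _ hy, hφ _ _ _ hx _ (hR _ _ hy)]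

theorem IsRotaBaxterBracket.rotaBaxterBracket_rotaBaxterBracket
    (hR : IsRotaBaxterBracket 𝒜 m α β R) {c d e : ι} (x y : M) {z u v : M}
    (hz : z ∈ 𝒜 c) (hu : u ∈ 𝒜 d) (hv : v ∈ 𝒜 e) :
    rotaBaxterBracket m R x y (rotaBaxterBracket m R z u v)
      = m (R x) (R y) (m (R z) (R u) v)
        + m (R x) (R y) (m (R z) u (R v))
        + m (R x) (R y) (m z (R u) (R v))
        + m (R x) y (m (R z) (R u) (R v))
        + m x (R y) (m (R z) (R u) (R v)) := by
  rw [rotaBaxterBracket_apply m R x y, ← hR.bracket_map _ _ _ _ hz _ hu _ hv,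
    rotaBaxterBracket_apply]
  simp only [map_add]

end RotaBaxter

section InducedStructures

variable {𝒜 : Γ → Submodule K g} {χ : Bicharacter K Γ} {m : g →ₗ[K] g →ₗ[K] g →ₗ[K] g}
  {μ : g →ₗ[K] g →ₗ[K] g} {α β R : g →ₗ[K] g}

theorem IsBiHomAssocColor.rotaBaxterMul_assoc (hA : IsBiHomAssocColor 𝒜 χ μ α β)
    (hR : IsRotaBaxterMul 𝒜 μ α β R) {a b c : Γ} {x y z : g}
    (hx : x ∈ 𝒜 a) (hy : y ∈ 𝒜 b) (hz : z ∈ 𝒜 c) :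
    rotaBaxterMul μ R (α x) (rotaBaxterMul μ R y z)
      = rotaBaxterMul μ R (rotaBaxterMul μ R x y) (β z) := by
  have hRx := hR.even _ _ hx
  have hRy := hR.even _ _ hy
  have hRz := hR.even _ _ hz
  calc rotaBaxterMul μ R (α x) (rotaBaxterMul μ R y z)
      = μ (α (R x)) (μ (R y) z) + μ (α (R x)) (μ y (R z)) + μ (α x) (μ (R y) (R z)) := by
        rw [rotaBaxterMul_apply μ R (α x), ← hR.mul_map _ _ _ hy _ hz, rotaBaxterMul_apply,
          hR.comm_alpha, map_add]
    _ = μ (μ (R x) (R y)) (β z) + μ (μ (R x) y) (β (R z)) + μ (μ x (R y)) (β (R z)) := by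
        rw [hA.assoc _ _ _ _ hRx _ hRy _ hz, hA.assoc _ _ _ _ hRx _ hy _ hRz,
          hA.assoc _ _ _ _ hx _ hRy _ hRz]
    _ = rotaBaxterMul μ R (rotaBaxterMul μ R x y) (β z) := by
        rw [rotaBaxterMul_apply μ R (rotaBaxterMul μ R x y), ← hR.mul_map _ _ _ hx _ hy,
          rotaBaxterMul_apply, hR.comm_beta, map_add, LinearMap.add_apply, add_assoc]

theorem IsBiHomAssocColor.rotaBaxter (hA : IsBiHomAssocColor 𝒜 χ μ α β)
    (hR : IsRotaBaxterMul 𝒜 μ α β R) :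
    IsBiHomAssocColor 𝒜 χ (rotaBaxterMul μ R) α β where
  mu_even _ _ _ hx _ hy := rotaBaxterMul_mem hR.even hA.mu_even hx hy
  alpha_even := hA.alpha_even
  beta_even := hA.beta_even
  comm := hA.comm
  mult_alpha _ _ _ hx _ hy := rotaBaxterMul_map_map hR.even hR.comm_alpha hA.mult_alpha hx hy
  mult_beta _ _ _ hx _ hy := rotaBaxterMul_map_map hR.even hR.comm_beta hA.mult_beta hx hy
  assoc _ _ _ _ hx _ hy _ hz := hA.rotaBaxterMul_assoc hR hx hy hz

theorem Is3BiHomLieColor.rotaBaxterBracket_skew_left (hL : Is3BiHomLieColor 𝒜 χ m α β)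
    (hR : IsEvenCommuting 𝒜 α β R) {a b c : Γ} {x y z : g}
    (hx : x ∈ 𝒜 a) (hy : y ∈ 𝒜 b) (hz : z ∈ 𝒜 c) :
    rotaBaxterBracket m R (β x) (β y) (α z)
      = -(χ.ε a b • rotaBaxterBracket m R (β y) (β x) (α z)) := by
  have hRx := hR.even _ _ hx
  have hRy := hR.even _ _ hy
  have hRz := hR.even _ _ hz
  simp only [rotaBaxterBracket_apply, hR.comm_alpha, hR.comm_beta]
  rw [hL.skew1 _ _ _ _ hRx _ hRy _ hz, hL.skew1 _ _ _ _ hRx _ hy _ hRz,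
    hL.skew1 _ _ _ _ hx _ hRy _ hRz]
  module

theorem Is3BiHomLieColor.rotaBaxterBracket_skew_right (hL : Is3BiHomLieColor 𝒜 χ m α β)
    (hR : IsEvenCommuting 𝒜 α β R) {a b c : Γ} {x y z : g}
    (hx : x ∈ 𝒜 a) (hy : y ∈ 𝒜 b) (hz : z ∈ 𝒜 c) :
    rotaBaxterBracket m R (β x) (β y) (α z)
      = -(χ.ε b c • rotaBaxterBracket m R (β x) (β z) (α y)) := by
  have hRx := hR.even _ _ hx
  have hRy := hR.even _ _ hy
  have hRz := hR.even _ _ hz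
  simp only [rotaBaxterBracket_apply, hR.comm_alpha, hR.comm_beta]
  rw [hL.skew2 _ _ _ _ hRx _ hRy _ hz, hL.skew2 _ _ _ _ hRx _ hy _ hRz,
    hL.skew2 _ _ _ _ hx _ hRy _ hRz]
  module

theorem Is3BiHomLieColor.rotaBaxterBracket_jacobi (hL : Is3BiHomLieColor 𝒜 χ m α β)
    (hR : IsRotaBaxterBracket 𝒜 m α β R) {a b c d e : Γ} {x y z u v : g}
    (hx : x ∈ 𝒜 a) (hy : y ∈ 𝒜 b) (hz : z ∈ 𝒜 c) (hu : u ∈ 𝒜 d) (hv : v ∈ 𝒜 e) :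
    rotaBaxterBracket m R (β (β x)) (β (β y)) (rotaBaxterBracket m R (β z) (β u) (α v))
      = χ.ε (a + b + c) (d + e) •
          rotaBaxterBracket m R (β (β u)) (β (β v)) (rotaBaxterBracket m R (β x) (β y) (α z))
        - (χ.ε (a + b) (c + e) * χ.ε d e) •
          rotaBaxterBracket m R (β (β z)) (β (β v)) (rotaBaxterBracket m R (β x) (β y) (α u))
        + χ.ε (a + b) (c + d) •
          rotaBaxterBracket m R (β (β z)) (β (β u)) (rotaBaxterBracket m R (β x) (β y) (α v)) := by
  have expand {c d e : Γ} (x y : g) {z u v : g} (hz : z ∈ 𝒜 c) (hu : u ∈ 𝒜 d) (hv : v ∈ 𝒜 e) :=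
    hR.rotaBaxterBracket_rotaBaxterBracket (β (β x)) (β (β y))
      (hL.beta_even _ _ hz) (hL.beta_even _ _ hu) (hL.alpha_even _ _ hv)
  have hRx := hR.even _ _ hx
  have hRy := hR.even _ _ hy
  have hRz := hR.even _ _ hz
  have hRu := hR.even _ _ hu
  have hRv := hR.even _ _ hv
  rw [expand x y hz hu hv, expand u v hx hy hz, expand z v hx hy hu, expand z u hx hy hv]
  simp only [hR.comm_alpha, hR.comm_beta]
  rw [hL.jacobi _ _ _ _ _ _ hRx _ hRy _ hRz _ hRu _ hv,
    hL.jacobi _ _ _ _ _ _ hRx _ hRy _ hRz _ hu _ hRv,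
    hL.jacobi _ _ _ _ _ _ hRx _ hRy _ hz _ hRu _ hRv,
    hL.jacobi _ _ _ _ _ _ hRx _ hy _ hRz _ hRu _ hRv,
    hL.jacobi _ _ _ _ _ _ hx _ hRy _ hRz _ hRu _ hRv]
  module

theorem Is3BiHomLieColor.rotaBaxter (hL : Is3BiHomLieColor 𝒜 χ m α β)
    (hR : IsRotaBaxterBracket 𝒜 m α β R) :
    Is3BiHomLieColor 𝒜 χ (rotaBaxterBracket m R) α β where
  bracket_even _ _ _ _ hx _ hy _ hz := rotaBaxterBracket_mem hR.even hL.bracket_even hx hy hz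
  alpha_even := hL.alpha_even
  beta_even := hL.beta_even
  skew1 _ _ _ _ hx _ hy _ hz := hL.rotaBaxterBracket_skew_left hR.toIsEvenCommuting hx hy hz
  skew2 _ _ _ _ hx _ hy _ hz := hL.rotaBaxterBracket_skew_right hR.toIsEvenCommuting hx hy hz
  jacobi _ _ _ _ _ _ hx _ hy _ hz _ hu _ hv := hL.rotaBaxterBracket_jacobi hR hx hy hz hu hv

theorem IsNC3BiHomPoissonColor.rotaBaxter_leibniz (hP : IsNC3BiHomPoissonColor 𝒜 χ m μ α β)
    (hRμ : IsRotaBaxterMul 𝒜 μ α β R) (hRm : IsRotaBaxterBracket 𝒜 m α β R)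
    {a b c d : Γ} {x y z t : g}
    (hx : x ∈ 𝒜 a) (hy : y ∈ 𝒜 b) (hz : z ∈ 𝒜 c) (ht : t ∈ 𝒜 d) :
    rotaBaxterBracket m R (α (β x)) (α (β y)) (rotaBaxterMul μ R z t)
      = rotaBaxterMul μ R (rotaBaxterBracket m R (β x) (β y) z) (β t)
        + χ.ε (a + b) c •
          rotaBaxterMul μ R (β z) (rotaBaxterBracket m R (α x) (α y) t) := by
  have hRx := hRμ.even _ _ hx
  have hRy := hRμ.even _ _ hy
  have hRz := hRμ.even _ _ hz
  have hRt := hRμ.even _ _ ht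
  have bracket_mul : rotaBaxterBracket m R (α (β x)) (α (β y)) (rotaBaxterMul μ R z t)
      = m (α (β (R x))) (α (β (R y))) (μ (R z) t) + m (α (β (R x))) (α (β (R y))) (μ z (R t))
        + m (α (β (R x))) (α (β y)) (μ (R z) (R t))
        + m (α (β x)) (α (β (R y))) (μ (R z) (R t)) := by
    rw [rotaBaxterBracket_apply, ← hRμ.mul_map _ _ _ hz _ ht, rotaBaxterMul_apply]
    simp only [hRμ.comm_alpha, hRμ.comm_beta, map_add]
  have mul_bracket_left : rotaBaxterMul μ R (rotaBaxterBracket m R (β x) (β y) z) (β t)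
      = μ (m (β (R x)) (β (R y)) (R z)) (β t) + μ (m (β (R x)) (β (R y)) z) (β (R t))
        + μ (m (β (R x)) (β y) (R z)) (β (R t)) + μ (m (β x) (β (R y)) (R z)) (β (R t)) := by
    rw [rotaBaxterMul_apply, ← hRm.bracket_map _ _ _ _ (hP.lie.beta_even _ _ hx) _
      (hP.lie.beta_even _ _ hy) _ hz, rotaBaxterBracket_apply]
    simp only [hRμ.comm_beta, map_add, LinearMap.add_apply, add_assoc]
  have mul_bracket_right : rotaBaxterMul μ R (β z) (rotaBaxterBracket m R (α x) (α y) t)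
      = μ (β (R z)) (m (α (R x)) (α (R y)) t) + μ (β z) (m (α (R x)) (α (R y)) (R t))
        + μ (β (R z)) (m (α (R x)) (α y) (R t)) + μ (β (R z)) (m (α x) (α (R y)) (R t)) := by
    rw [rotaBaxterMul_apply, ← hRm.bracket_map _ _ _ _ (hP.lie.alpha_even _ _ hx) _
      (hP.lie.alpha_even _ _ hy) _ ht, rotaBaxterBracket_apply]
    simp only [hRμ.comm_alpha, hRμ.comm_beta, map_add]
    abel
  rw [bracket_mul, mul_bracket_left, mul_bracket_right,
    hP.leibniz _ _ _ _ _ hRx _ hRy _ hRz _ ht, hP.leibniz _ _ _ _ _ hRx _ hRy _ hz _ hRt,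
    hP.leibniz _ _ _ _ _ hRx _ hy _ hRz _ hRt, hP.leibniz _ _ _ _ _ hx _ hRy _ hRz _ hRt]
  module

end InducedStructures

/-- a Rota-Baxter operator of weight zero on a noncommutative
3-BiHom-Poisson color algebra induces a new noncommutative 3-BiHom-Poisson
color algebra structure. -/
theorem rotaBaxter_induced_nc3BiHomPoisson
    (𝒜 : Γ → Submodule K g) (χ : Bicharacter K Γ)
    (m : g →ₗ[K] g →ₗ[K] g →ₗ[K] g) (μ : g →ₗ[K] g →ₗ[K] g) (α β : g →ₗ[K] g)
    (hP : IsNC3BiHomPoissonColor 𝒜 χ m μ α β)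
    (R : g →ₗ[K] g)
    (hRe : ∀ a, ∀ x ∈ 𝒜 a, R x ∈ 𝒜 a)
    (hRα : ∀ x, R (α x) = α (R x)) (hRβ : ∀ x, R (β x) = β (R x))
    (hRBμ : ∀ a b, ∀ x ∈ 𝒜 a, ∀ y ∈ 𝒜 b,
      μ (R x) (R y) = R (μ (R x) y + μ x (R y)))
    (hRBm : ∀ a b c, ∀ x ∈ 𝒜 a, ∀ y ∈ 𝒜 b, ∀ z ∈ 𝒜 c,
      m (R x) (R y) (R z)
        = R (m (R x) (R y) z + m (R x) y (R z) + m x (R y) (R z)))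
    (μR : g →ₗ[K] g →ₗ[K] g)
    (hμR : ∀ x y, μR x y = μ (R x) y + μ x (R y))
    (mR : g →ₗ[K] g →ₗ[K] g →ₗ[K] g)
    (hmR : ∀ x y z, mR x y z = m (R x) (R y) z + m (R x) y (R z) + m x (R y) (R z)) :
    IsNC3BiHomPoissonColor 𝒜 χ mR μR α β := by
  obtain rfl : μR = rotaBaxterMul μ R := LinearMap.ext₂ hμR
  obtain rfl : mR = rotaBaxterBracket m R := LinearMap.ext fun x => LinearMap.ext₂ (hmR x)
  have hRμ : IsRotaBaxterMul 𝒜 μ α β R := ⟨⟨hRe, hRα, hRβ⟩, hRBμ⟩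
  have hRm : IsRotaBaxterBracket 𝒜 m α β R := ⟨⟨hRe, hRα, hRβ⟩, hRBm⟩
  exact
    { assoc := hP.assoc.rotaBaxter hRμ
      lie := hP.lie.rotaBaxter hRm
      leibniz := fun _ _ _ _ _ hx _ hy _ hz _ ht => hP.rotaBaxter_leibniz hRμ hRm hx hy hz ht }
end
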